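/- arXiv:2212.09957 — 2 statements merged into one kernel-verified Lean document; each statement's English description precedes it below -/
import Mathlib

section
/- (Proposition 1(iii).) The interpolant p^h(T,k) is a convex function of k on [0,1] for every fixed T ∈ [0,1] if and only if ρ_{i,j+2} − ρ_{i,j+1} ≥ ρ_{i,j+1} − ρ_{i,j} for all indices 0 ≤ i ≤ N and 0 ≤ j ≤ N−2. -/
/-- The 1D hat function with mesh `h` centered at `c`. -/
noncomputable def hat (h c t : ℝ) : ℝ := max (1 - |t - c| / h) 0

/-- The finite-dimensional hat-function interpolant `p^h` with mesh `h = 1/N`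
and coefficients `ρ`. -/
noncomputable def interp (N : ℕ) (ρ : ℕ → ℕ → ℝ) (T k : ℝ) : ℝ :=
  ∑ i ∈ Finset.range (N + 1), ∑ j ∈ Finset.range (N + 1),
    ρ i j * (hat (1 / N) ((i : ℝ) * (1 / N)) T * hat (1 / N) ((j : ℝ) * (1 / N)) k)

lemma aux_hat (N : ℕ) (hN : 1 ≤ N) (j : ℕ) (k : ℝ) :
    hat (1 / N) ((j : ℝ) * (1 / N)) k
      = max ((N : ℝ) * k - j - 1) 0 - 2 * max ((N : ℝ) * k - j) 0 + max ((N : ℝ) * k - j + 1) 0 := by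
  have hN' : (0 : ℝ) < N := by exact_mod_cast hN
  have h1 : |k - (j : ℝ) * (1 / N)| / (1 / N) = |(N : ℝ) * k - j| := by
    have : (N : ℝ) * k - j = N * (k - (j : ℝ) * (1 / N)) := by field_simp
    rw [this, abs_mul, abs_of_pos hN']
    field_simp
  unfold hat
  rw [h1]
  generalize (N : ℝ) * k - j = y
  rcases abs_cases y with ⟨h, h'⟩ | ⟨h, h'⟩ <;> rw [h] <;>
  rcases max_cases (y - 1) 0 with ⟨e1, f1⟩ | ⟨e1, f1⟩ <;>
  rcases max_cases y 0 with ⟨e2, f2⟩ | ⟨e2, f2⟩ <;>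
  rcases max_cases (y + 1) 0 with ⟨e3, f3⟩ | ⟨e3, f3⟩ <;>
  rw [e1, e2, e3] <;>
  first
  | (rw [max_eq_left (by linarith)]; linarith)
  | (rw [max_eq_right (by linarith)]; linarith)

lemma aux_sum (a : ℕ → ℝ) (x : ℝ) (n : ℕ) :
    ∑ j ∈ Finset.range (n + 2),
        a j * (max (x - j - 1) 0 - 2 * max (x - j) 0 + max (x - j + 1) 0)
      = a 0 * max (x + 1) 0 + (a 1 - 2 * a 0) * max x 0
        + ∑ m ∈ Finset.range n, (a (m + 2) - 2 * a (m + 1) + a m) * max (x - m - 1) 0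
        + (a n - 2 * a (n + 1)) * max (x - n - 1) 0 + a (n + 1) * max (x - n - 2) 0 := by
  induction n with
  | zero =>
    simp [Finset.sum_range_succ]
    ring_nf
  | succ n ih =>
    rw [Finset.sum_range_succ, ih, Finset.sum_range_succ _ n]
    push_cast
    ring_nf

lemma aux_convex (N : ℕ) (hN : 1 ≤ N) (a : ℕ → ℝ)
    (h : ∀ j, j + 2 ≤ N → a (j + 1) - a j ≤ a (j + 2) - a (j + 1)) :
    ConvexOn ℝ (Set.Icc (0 : ℝ) 1)
      (fun k => ∑ j ∈ Finset.range (N + 1), a j * hat (1 / N) ((j : ℝ) * (1 / N)) k) := by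
  obtain ⟨n, rfl⟩ : ∃ n, N = n + 1 := ⟨N - 1, by omega⟩
  have hc : Convex ℝ (Set.Icc (0 : ℝ) 1) := convex_Icc 0 1
  have haff : ∀ c d : ℝ, ConvexOn ℝ (Set.Icc (0 : ℝ) 1) (fun k => c * k + d) := by
    intro c d
    refine ⟨hc, ?_⟩
    intro x _ y _ s t _ _ hst
    simp only [smul_eq_mul]
    have : d = (s + t) * d := by rw [hst, one_mul]
    nlinarith
  have key : ConvexOn ℝ (Set.Icc (0 : ℝ) 1) (fun k =>
      ((a 1 - a 0) * ((n + 1 : ℕ) : ℝ)) * k + a 0 + ∑ m ∈ Finset.range n,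
        (a (m + 2) - 2 * a (m + 1) + a m) * max (((n + 1 : ℕ) : ℝ) * k - m - 1) 0) := by
    refine (haff _ _).add ?_
    have : ∀ s : Finset ℕ, s ⊆ Finset.range n → ConvexOn ℝ (Set.Icc (0 : ℝ) 1) (fun k =>
        ∑ m ∈ s, (a (m + 2) - 2 * a (m + 1) + a m) * max (((n + 1 : ℕ) : ℝ) * k - m - 1) 0) := by
      intro s
      induction s using Finset.induction_on with
      | empty => intro _; simpa using convexOn_const (0 : ℝ) hc
      | insert m s hm ih =>
        intro hs
        simp only [Finset.sum_insert hm]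
        refine ConvexOn.add ?_ (ih fun x hx => hs (Finset.mem_insert_of_mem hx))
        have hmn := Finset.mem_range.1 (hs (Finset.mem_insert_self m s))
        have h1 := h m (by omega)
        have h2 : ConvexOn ℝ (Set.Icc (0 : ℝ) 1)
            (fun k => max (((n + 1 : ℕ) : ℝ) * k - m - 1) 0) := by
          have := (haff ((n + 1 : ℕ) : ℝ) (-m - 1)).sup (convexOn_const (0 : ℝ) hc)
          refine this.congr ?_
          intro k _
          show max _ _ = _
          simp only []
          congr 1
          ring
        exact h2.smul (c := a (m + 2) - 2 * a (m + 1) + a m) (by linarith)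
    exact this _ subset_rfl
  refine key.congr ?_
  intro k hk
  simp only [aux_hat _ hN]
  rw [show n + 1 + 1 = n + 2 from rfl, aux_sum a]
  have h0 : 0 ≤ ((n + 1 : ℕ) : ℝ) * k := mul_nonneg (by positivity) hk.1
  have h1 : ((n + 1 : ℕ) : ℝ) * k ≤ n + 1 := by
    have := mul_le_mul_of_nonneg_left hk.2 (show (0 : ℝ) ≤ ((n + 1 : ℕ) : ℝ) by positivity)
    push_cast at this ⊢
    linarith
  rw [max_eq_left (a := ((n + 1 : ℕ) : ℝ) * k + 1) (by linarith), max_eq_left h0,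
    max_eq_right (a := ((n + 1 : ℕ) : ℝ) * k - n - 1) (by linarith),
    max_eq_right (a := ((n + 1 : ℕ) : ℝ) * k - n - 2) (by linarith)]
  ring

lemma aux_node (N : ℕ) (hN : 1 ≤ N) (i j : ℕ) :
    hat (1 / N) ((i : ℝ) * (1 / N)) ((j : ℝ) * (1 / N)) = if i = j then 1 else 0 := by
  have hN' : (0 : ℝ) < N := by exact_mod_cast hN
  split_ifs with h
  · subst h
    simp [hat]
  · have h1 : |(j : ℝ) * (1 / N) - (i : ℝ) * (1 / N)| / (1 / N) = |(j : ℝ) - i| := by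
      rw [← sub_mul, abs_mul, abs_of_pos (by positivity : (0 : ℝ) < 1 / N)]
      field_simp
    have h2 : (1 : ℝ) ≤ |(j : ℝ) - i| := by
      have : (1 : ℤ) ≤ |(j : ℤ) - i| := Int.one_le_abs (by omega)
      exact_mod_cast this
    unfold hat
    rw [h1]
    exact max_eq_right (by linarith)

lemma aux_interp_node (N : ℕ) (hN : 1 ≤ N) (ρ : ℕ → ℕ → ℝ) (i j : ℕ) (hi : i ≤ N) (hj : j ≤ N) :
    interp N ρ ((i : ℝ) * (1 / N)) ((j : ℝ) * (1 / N)) = ρ i j := by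
  unfold interp
  simp only [aux_node N hN]
  rw [Finset.sum_eq_single i, Finset.sum_eq_single j]
  · simp
  · intro b _ hb; simp [hb]
  · intro hb; exact absurd (Finset.mem_range.2 (by omega)) hb
  · intro b _ hb; simp [hb]
  · intro hb; exact absurd (Finset.mem_range.2 (by omega)) hb

/-- Proposition 1(iii): `p^h(T,k)` is convex in `k` on `[0,1]` for every
fixed `T ∈ [0,1]` iff `ρ_{i,j+2} − ρ_{i,j+1} ≥ ρ_{i,j+1} − ρ_{i,j}` for all
`0 ≤ i ≤ N`, `0 ≤ j ≤ N−2`. -/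
theorem interp_convex_iff (N : ℕ) (hN : 1 ≤ N) (ρ : ℕ → ℕ → ℝ) :
    (∀ T ∈ Set.Icc (0 : ℝ) 1, ConvexOn ℝ (Set.Icc (0 : ℝ) 1) (fun k => interp N ρ T k)) ↔
      (∀ i j : ℕ, i ≤ N → j + 2 ≤ N →
        ρ i (j + 1) - ρ i j ≤ ρ i (j + 2) - ρ i (j + 1)) := by
  have hN' : (0 : ℝ) < N := by exact_mod_cast hN
  constructor
  · intro H i j hi hj
    have hmem : ∀ m : ℕ, m ≤ N → (m : ℝ) * (1 / N) ∈ Set.Icc (0 : ℝ) 1 := by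
      intro m hm
      have hm' : (m : ℝ) ≤ N := by exact_mod_cast hm
      refine ⟨by positivity, ?_⟩
      rw [mul_one_div]
      exact (div_le_one hN').2 hm'
    have h := (H _ (hmem i hi)).2 (hmem j (by omega)) (hmem (j + 2) hj)
      (show (0 : ℝ) ≤ 1 / 2 by norm_num) (show (0 : ℝ) ≤ 1 / 2 by norm_num) (by norm_num)
    have e : (1 / 2 : ℝ) • ((j : ℝ) * (1 / N)) + (1 / 2 : ℝ) • (((j + 2 : ℕ) : ℝ) * (1 / N))
        = ((j + 1 : ℕ) : ℝ) * (1 / N) := by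
      simp only [smul_eq_mul]
      push_cast
      ring
    rw [e] at h
    simp only [smul_eq_mul] at h
    rw [aux_interp_node N hN ρ i j hi (by omega), aux_interp_node N hN ρ i (j + 1) hi (by omega),
      aux_interp_node N hN ρ i (j + 2) hi hj] at h
    linarith
  · intro H T _
    have : ∀ s : Finset ℕ, s ⊆ Finset.range (N + 1) → ConvexOn ℝ (Set.Icc (0 : ℝ) 1) (fun k =>
        ∑ i ∈ s, ∑ j ∈ Finset.range (N + 1), ρ i j *
          (hat (1 / N) ((i : ℝ) * (1 / N)) T * hat (1 / N) ((j : ℝ) * (1 / N)) k)) := by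
      intro s
      induction s using Finset.induction_on with
      | empty => intro _; simpa using convexOn_const (0 : ℝ) (convex_Icc (0 : ℝ) 1)
      | insert i s hi ih =>
        intro hs
        simp only [Finset.sum_insert hi]
        refine ConvexOn.add ?_ (ih fun x hx => hs (Finset.mem_insert_of_mem hx))
        have hiN := Finset.mem_range.1 (hs (Finset.mem_insert_self i s))
        have h1 := aux_convex N hN (ρ i) (fun j hj => H i j (by omega) hj)
        have h2 := h1.smul (c := hat (1 / N) ((i : ℝ) * (1 / N)) T) (le_max_right _ _)
        refine h2.congr ?_
        intro k _
        simp only [smul_eq_mul, Finset.mul_sum]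
        refine Finset.sum_congr rfl fun j _ => ?_
        ring
    exact this _ subset_rfl
end

section
/- (Combined no-arbitrage equivalence.) The interpolant p^h belongs to the shape-constrained class M — i.e. p^h is nonnegative on [0,1]², nondecreasing in T for every fixed k ∈ [0,1], and convex in k for every fixed T ∈ [0,1] — if and only if the coefficient vector ρ belongs to M^h, i.e. ρ_{ij} ≥ 0 for all i,j, ρ_{i+1,j} ≥ ρ_{i,j} for all 0 ≤ i ≤ N−1 and all j, and ρ_{i,j+2} − ρ_{i,j+1} ≥ ρ_{i,j+1} − ρ_{i,j} for all i and all 0 ≤ j ≤ N−2. -/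
/-- 1D hat interpolant. -/
noncomputable def lin1 (N : ℕ) (c : ℕ → ℝ) (x : ℝ) : ℝ :=
  ∑ i ∈ Finset.range (N + 1), c i * hat (1 / N) ((i : ℝ) * (1 / N)) x

lemma hat_nonneg' (h c t : ℝ) : 0 ≤ hat h c t := le_max_right _ _

lemma hat_scaled (N : ℕ) (hN : 1 ≤ N) (i : ℕ) (x : ℝ) :
    hat (1 / N) ((i : ℝ) * (1 / N)) x = max (1 - |N * x - i|) 0 := by
  have hp : (0 : ℝ) < N := by exact_mod_cast hN
  unfold hat
  have : |x - (i : ℝ) * (1 / N)| / (1 / N) = |N * x - i| := by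
    rw [div_div_eq_mul_div, div_one, ← abs_of_pos hp, ← abs_mul, abs_of_pos hp]
    congr 1
    field_simp
  rw [this]

/-- Clamp to the unit interval. -/
noncomputable def clamp1 (x : ℝ) : ℝ := max x 0 - max (x - 1) 0

lemma clamp1_mono : Monotone clamp1 := by
  intro a b h
  unfold clamp1
  rcases max_cases a 0 with h1 | h1 <;> rcases max_cases (a - 1) 0 with h2 | h2 <;>
  rcases max_cases b 0 with h3 | h3 <;> rcases max_cases (b - 1) 0 with h4 | h4 <;> linarith

lemma hat_clamp (x : ℝ) : max (1 - |x|) 0 = clamp1 (x + 1) - clamp1 x := by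
  unfold clamp1
  rcases abs_cases x with h | h <;> rcases max_cases (1 - |x|) 0 with h1 | h1 <;>
  rcases max_cases (x + 1) 0 with h2 | h2 <;> rcases max_cases (x + 1 - 1) 0 with h3 | h3 <;>
  rcases max_cases x 0 with h4 | h4 <;> rcases max_cases (x - 1) 0 with h5 | h5 <;> linarith

lemma sum_clamp (c : ℕ → ℝ) (y : ℝ) (hy : 0 ≤ y) (n : ℕ) :
    ∑ i ∈ Finset.range (n + 1), c i * max (1 - |y - i|) 0 =
      c 0 + ∑ j ∈ Finset.range n, (c (j + 1) - c j) * clamp1 (y - j) - c n * clamp1 (y - n) := by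
  induction n with
  | zero =>
    have : clamp1 (y + 1) = 1 := by
      unfold clamp1
      rw [max_eq_left (by linarith), max_eq_left (by linarith)]; ring
    simp [hat_clamp, this]; ring
  | succ n ih =>
    rw [Finset.sum_range_succ, ih, Finset.sum_range_succ, hat_clamp]
    have : y - ((n + 1 : ℕ) : ℝ) + 1 = y - n := by push_cast; ring
    rw [this]; ring

lemma sum_relu (d : ℕ → ℝ) (y : ℝ) (n : ℕ) :
    ∑ j ∈ Finset.range (n + 1), d j * clamp1 (y - j) =
      d 0 * max y 0 + ∑ j ∈ Finset.range n, (d (j + 1) - d j) * max (y - (j + 1)) 0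
        - d n * max (y - (n + 1)) 0 := by
  induction n with
  | zero => simp [clamp1]; ring
  | succ n ih =>
    rw [Finset.sum_range_succ, ih, Finset.sum_range_succ, clamp1]
    have : y - ((n + 1 : ℕ) : ℝ) - 1 = y - (((n + 1 : ℕ) : ℝ) + 1) := by ring
    rw [this]; push_cast; ring

lemma lin1_eq_clamp (N : ℕ) (hN : 1 ≤ N) (c : ℕ → ℝ) (x : ℝ) (hx : x ∈ Set.Icc (0 : ℝ) 1) :
    lin1 N c x = c 0 + ∑ j ∈ Finset.range N, (c (j + 1) - c j) * clamp1 (N * x - j) := by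
  have hp : (0 : ℝ) < N := by exact_mod_cast hN
  unfold lin1
  simp_rw [hat_scaled N hN]
  rw [sum_clamp c _ (mul_nonneg hp.le hx.1)]
  have h : (N : ℝ) * x - N ≤ 0 := by nlinarith [hx.2]
  have : clamp1 (N * x - N) = 0 := by
    unfold clamp1
    rw [max_eq_right h, max_eq_right (by linarith)]; ring
  rw [this]; ring

lemma lin1_nonneg (N : ℕ) (c : ℕ → ℝ) (hc : ∀ i ≤ N, 0 ≤ c i) (x : ℝ) : 0 ≤ lin1 N c x :=
  Finset.sum_nonneg fun i hi => mul_nonneg (hc i (by simp at hi; omega)) (hat_nonneg' _ _ _)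

lemma lin1_mono (N : ℕ) (hN : 1 ≤ N) (c : ℕ → ℝ) (hc : ∀ i, i + 1 ≤ N → c i ≤ c (i + 1)) :
    MonotoneOn (lin1 N c) (Set.Icc 0 1) := by
  intro a ha b hb hab
  rw [lin1_eq_clamp N hN c a ha, lin1_eq_clamp N hN c b hb]
  gcongr with j hj
  · have := hc j (by simp at hj; omega)
    linarith
  · apply clamp1_mono
    gcongr

lemma lin1_convex (N : ℕ) (hN : 1 ≤ N) (c : ℕ → ℝ)
    (hc : ∀ j, j + 2 ≤ N → c (j + 1) - c j ≤ c (j + 2) - c (j + 1)) :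
    ConvexOn ℝ (Set.Icc 0 1) (lin1 N c) := by
  obtain ⟨m, rfl⟩ : ∃ m, N = m + 1 := ⟨N - 1, by omega⟩
  have hp : (0 : ℝ) < ((m + 1 : ℕ) : ℝ) := by positivity
  have key : ∀ x ∈ Set.Icc (0 : ℝ) 1, lin1 (m + 1) c x =
      c 0 + (c 1 - c 0) * (((m + 1 : ℕ) : ℝ) * x) + ∑ j ∈ Finset.range m,
        (c (j + 2) - c (j + 1) - (c (j + 1) - c j)) *
          max (((m + 1 : ℕ) : ℝ) * x - (j + 1)) 0 := by
    intro x hx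
    rw [lin1_eq_clamp _ hN c x hx, sum_relu (fun j => c (j + 1) - c j)]
    have h : ((m + 1 : ℕ) : ℝ) * x - (m + 1) ≤ 0 := by push_cast at *; nlinarith [hx.2]
    rw [max_eq_right h, max_eq_left (mul_nonneg hp.le hx.1)]
    simp only [zero_add, add_assoc, one_add_one_eq_two]
    ring
  refine ⟨convex_Icc 0 1, ?_⟩
  intro x hx y hy a b ha hb hab
  rw [key _ (convex_Icc (0 : ℝ) 1 hx hy ha hb hab), key x hx, key y hy]
  simp only [smul_eq_mul, mul_add, Finset.mul_sum]
  generalize ((m + 1 : ℕ) : ℝ) = M at *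
  have hs : ∑ j ∈ Finset.range m, (c (j + 2) - c (j + 1) - (c (j + 1) - c j)) *
          max (M * (a * x) + M * (b * y) - (j + 1)) 0 ≤
      ∑ j ∈ Finset.range m, a * ((c (j + 2) - c (j + 1) - (c (j + 1) - c j)) *
          max (M * x - (j + 1)) 0) +
      ∑ j ∈ Finset.range m, b * ((c (j + 2) - c (j + 1) - (c (j + 1) - c j)) *
          max (M * y - (j + 1)) 0) := by
    rw [← Finset.sum_add_distrib]
    apply Finset.sum_le_sum
    intro j hj
    have h1 := hc j (by simp at hj; omega)
    have h2 : max (M * (a * x) + M * (b * y) - (j + 1)) 0 ≤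
        a * max (M * x - (j + 1)) 0 + b * max (M * y - (j + 1)) 0 := by
      have e1 := mul_le_mul_of_nonneg_left (le_max_left (M * x - (j + 1)) 0) ha
      have e2 := mul_le_mul_of_nonneg_left (le_max_left (M * y - (j + 1)) 0) hb
      apply max_le
      · have : M * (a * x) + M * (b * y) - (j + 1) =
          a * (M * x - (j + 1)) + b * (M * y - (j + 1)) := by
          linear_combination (j + 1 : ℝ) * hab
        linarith
      · positivity
    have h3 := mul_le_mul_of_nonneg_left h2
      (show 0 ≤ c (j + 2) - c (j + 1) - (c (j + 1) - c j) by linarith)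
    linarith
  have h0 : c 0 = a * c 0 + b * c 0 := by rw [← add_mul, hab, one_mul]
  linarith

lemma lin1_node (N : ℕ) (hN : 1 ≤ N) (c : ℕ → ℝ) (i : ℕ) (hi : i ≤ N) :
    lin1 N c ((i : ℝ) / N) = c i := by
  have hp : (0 : ℝ) < N := by exact_mod_cast hN
  unfold lin1
  simp_rw [hat_scaled N hN]
  rw [mul_div_cancel₀ _ hp.ne']
  rw [Finset.sum_eq_single i]
  · simp
  · intro j _ hji
    have : (1 : ℝ) ≤ |(i : ℝ) - j| := by
      have : (1 : ℤ) ≤ |(i : ℤ) - j| := Int.one_le_abs (by omega)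
      exact_mod_cast this
    rw [max_eq_right (by linarith), mul_zero]
  · intro h; simp at h; omega

lemma interp_eq1 (N : ℕ) (ρ : ℕ → ℕ → ℝ) (T k : ℝ) :
    interp N ρ T k = lin1 N (fun i => lin1 N (ρ i) k) T := by
  unfold interp lin1
  refine Finset.sum_congr rfl fun i _ => ?_
  rw [Finset.sum_mul]
  exact Finset.sum_congr rfl fun j _ => by ring

lemma interp_eq2 (N : ℕ) (ρ : ℕ → ℕ → ℝ) (T k : ℝ) :
    interp N ρ T k = lin1 N (fun j => lin1 N (fun i => ρ i j) T) k := by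
  unfold interp lin1
  rw [Finset.sum_comm]
  refine Finset.sum_congr rfl fun i _ => ?_
  rw [Finset.sum_mul]
  exact Finset.sum_congr rfl fun j _ => by ring

lemma interp_node (N : ℕ) (hN : 1 ≤ N) (ρ : ℕ → ℕ → ℝ) (i j : ℕ) (hi : i ≤ N) (hj : j ≤ N) :
    interp N ρ ((i : ℝ) / N) ((j : ℝ) / N) = ρ i j := by
  rw [interp_eq1, lin1_node N hN _ i hi, lin1_node N hN _ j hj]

lemma node_mem (N : ℕ) (hN : 1 ≤ N) (i : ℕ) (hi : i ≤ N) :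
    (i : ℝ) / N ∈ Set.Icc (0 : ℝ) 1 :=
  ⟨by positivity, div_le_one_of_le₀ (by exact_mod_cast hi) (by positivity)⟩

/-- combined no-arbitrage equivalence: `p^h` is nonnegative on `[0,1]²`,
nondecreasing in `T` for every fixed `k ∈ [0,1]`, and convex in `k` for every fixed
`T ∈ [0,1]`, iff the coefficient vector `ρ` satisfies `ρ_{ij} ≥ 0` for all `i,j`,
`ρ_{i+1,j} ≥ ρ_{i,j}` for all `0 ≤ i ≤ N−1` and all `j`, and
`ρ_{i,j+2} − ρ_{i,j+1} ≥ ρ_{i,j+1} − ρ_{i,j}` for all `i` and all `0 ≤ j ≤ N−2`. -/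
theorem interp_shape_constraints_iff (N : ℕ) (hN : 1 ≤ N) (ρ : ℕ → ℕ → ℝ) :
    ((∀ T ∈ Set.Icc (0 : ℝ) 1, ∀ k ∈ Set.Icc (0 : ℝ) 1, 0 ≤ interp N ρ T k) ∧
     (∀ k ∈ Set.Icc (0 : ℝ) 1, MonotoneOn (fun T => interp N ρ T k) (Set.Icc (0 : ℝ) 1)) ∧
     (∀ T ∈ Set.Icc (0 : ℝ) 1, ConvexOn ℝ (Set.Icc (0 : ℝ) 1) (fun k => interp N ρ T k))) ↔
      ((∀ i j : ℕ, i ≤ N → j ≤ N → 0 ≤ ρ i j) ∧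
       (∀ i j : ℕ, i + 1 ≤ N → j ≤ N → ρ i j ≤ ρ (i + 1) j) ∧
       (∀ i j : ℕ, i ≤ N → j + 2 ≤ N →
         ρ i (j + 1) - ρ i j ≤ ρ i (j + 2) - ρ i (j + 1))) := by
  constructor
  · rintro ⟨h1, h2, h3⟩
    refine ⟨fun i j hi hj => ?_, fun i j hi hj => ?_, fun i j hi hj => ?_⟩
    · rw [← interp_node N hN ρ i j hi hj]
      exact h1 _ (node_mem N hN i hi) _ (node_mem N hN j hj)
    · rw [← interp_node N hN ρ i j (by omega) hj, ← interp_node N hN ρ (i + 1) j hi hj]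
      refine h2 _ (node_mem N hN j hj) (node_mem N hN i (by omega)) (node_mem N hN _ hi) ?_
      gcongr
      omega
    · have h := (h3 _ (node_mem N hN i hi)).2 (node_mem N hN j (by omega))
        (node_mem N hN (j + 2) hj) (show (0 : ℝ) ≤ 1 / 2 by norm_num)
        (show (0 : ℝ) ≤ 1 / 2 by norm_num) (by norm_num)
      have e : (1 / 2 : ℝ) • ((j : ℝ) / N) + (1 / 2 : ℝ) • (((j + 2 : ℕ) : ℝ) / N) =
          ((j + 1 : ℕ) : ℝ) / N := by
        simp only [smul_eq_mul]; push_cast; ring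
      simp only [e] at h
      rw [interp_node N hN ρ i (j + 1) hi (by omega), interp_node N hN ρ i j hi (by omega),
        interp_node N hN ρ i (j + 2) hi hj] at h
      simp only [smul_eq_mul] at h
      linarith
  · rintro ⟨h1, h2, h3⟩
    refine ⟨fun T _ k _ => ?_, fun k _ => ?_, fun T _ => ?_⟩
    · rw [interp_eq1]
      exact lin1_nonneg N _ (fun i hi => lin1_nonneg N _ (fun j hj => h1 i j hi hj) k) T
    · simp_rw [interp_eq1]
      refine lin1_mono N hN _ fun i hi => ?_
      refine Finset.sum_le_sum fun j hj => ?_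
      exact mul_le_mul_of_nonneg_right (h2 i j hi (by simp at hj; omega)) (hat_nonneg' _ _ _)
    · simp_rw [interp_eq2]
      refine lin1_convex N hN _ fun j hj => ?_
      unfold lin1
      rw [← Finset.sum_sub_distrib, ← Finset.sum_sub_distrib]
      refine Finset.sum_le_sum fun i hi => ?_
      rw [← sub_mul, ← sub_mul]
      exact mul_le_mul_of_nonneg_right (h3 i j (by simp at hi; omega) hj) (hat_nonneg' _ _ _)
end
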